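/- Let f : (A₊)^k → ℂ (k ≥ 1) be such that the sum Σ over all tuples (G₁,…,G_k) ∈ (A₊)^k of 2^{ω(G₁)+⋯+ω(G_k)} · |(μ_k ∗ f)(G₁,…,G_k)| / (|G₁|⋯|G_k|) is finite. Then for every (G₁,…,G_k) ∈ (A₊)^k the family ( C_{H₁,…,H_k} · η(G₁,H₁)⋯η(G_k,H_k) ) indexed by (H₁,…,H_k) ∈ (A₊)^k is absolutely summable with sum f(G₁,…,G_k), where C_{H₁,…,H_k} = Σ_{M₁,…,M_k ∈ A₊} (μ_k ∗ f)(M₁H₁,…,M_kH_k) / (|M₁H₁|⋯|M_kH_k|) (this series also converges absolutely). -/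

import Mathlib

/-!
Put `a(N) = (μ_k ∗ f)(N) / |N|` for a tuple `N` of monic polynomials. Writing `N = M H`, the double
series `∑_H ∑_M a(M H) ∏ η(G_i, H_i)` is a sum over pairs `H ∣ N`, so formally it equals
`∑_N a(N) ∏_i ∑_{H_i ∣ N_i} η(G_i, H_i)`. Two facts about a single Ramanujan sum carry the proof:

* `∑_{H ∣ N} η(G, H)` is `|N|` if `N ∣ G` and `0` otherwise (`sum_eta`), so the rearranged series is
  the finite sum `∑_{N ∣ G} (μ_k ∗ f)(N)`, which is `f(G)` by Möbius inversion (`sum_muConv`);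
* `∑_{H ∣ N} |η(G, H)| ≤ 2 ^ ω(N) σ(G)` with `σ(G) = ∑_{D ∣ G} |D|` (`sum_norm_eta_le`), so the
  hypothesis on `f` makes the double series absolutely convergent.

Both follow from the evaluation `η(G, H) = ∑_{E ∣ H, H / E ∣ G} μ(E) |H / E|` (`eta_eq`). To obtain
it, the coprimality condition in `η` is detected with the Möbius function, the sum over the
multiples `D = E D'` of `E` is reduced to the modulus `H / E` (`echar_mul`), and the resulting
complete character sums are evaluated by orthogonality (`sum_echar`). The sums of `μ` and `|μ|` over
the divisors of `N` come from the correspondence between squarefree monic divisors of `N` and sets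
of monic irreducible divisors of `N` (`sum_squarefree_mdiv`).
-/

open Polynomial UniqueFactorizationMonoid

variable (p : ℕ) [Fact p.Prime] (F : Type) [Field F] [Fintype F] [DecidableEq F]
  [Algebra (ZMod p) F]

/-- The absolute value `|G| = q ^ deg G` of a polynomial over `𝔽_q`. -/
def anorm (G : Polynomial F) : ℕ := Fintype.card F ^ G.natDegree

/-- `t_H(A')`: the coefficient of `T^(m-1)` in the remainder of `A'` upon division by `H`,
where `m = deg H`. -/
noncomputable def tmap (H A' : Polynomial F) : F := (A' % H).coeff (H.natDegree - 1)

/-- The additive character `E(G,H)(D) = exp(2πi · tr(t_H(G·D)) / p)`. -/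
noncomputable def echar (G H D : Polynomial F) : ℂ :=
  Complex.exp (2 * Real.pi * Complex.I *
    ((Algebra.trace (ZMod p) F (tmap F H (G * D))).val : ℂ) / (p : ℂ))

open scoped Classical in
/-- `ω(G)`: the number of distinct monic irreducible divisors of `G`. -/
noncomputable def omega (G : Polynomial F) : ℕ := (normalizedFactors G).toFinset.card

open scoped Classical in
/-- The Möbius function on `𝔽_q[T]`. -/
noncomputable def mu (G : Polynomial F) : ℤ :=
  if Squarefree G then (-1) ^ omega F G else 0

/-- The polynomial Ramanujan sum `η(G,H)`: the sum of `E(G,H)(D)` over a complete residue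
system `D` modulo `H` with `(D,H) = 1`. -/
noncomputable def eta (G H : Polynomial F) : ℂ :=
  ∑' D : {D : Polynomial F // D.degree < H.degree ∧ IsCoprime D H}, echar p F G H D.1

open scoped Classical in
/-- The unitary gcd `(G,H)_*`: the monic polynomial of highest degree dividing `G` and
unitarily dividing `H`. -/
noncomputable def ugcd (G H : Polynomial F) : Polynomial F :=
  ∏ P ∈ (normalizedFactors H).toFinset,
    if P ^ (normalizedFactors H).count P ∣ G then P ^ (normalizedFactors H).count P else 1

/-- `μ*(G) = (-1)^(ω(G))`. -/
noncomputable def muStar (G : Polynomial F) : ℤ := (-1) ^ omega F G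

/-- The unitary polynomial Ramanujan sum `η*(G,H)`: the sum of `E(G,H)(D)` over a complete
residue system `D` modulo `H` with `(D,H)_* = 1`. -/
noncomputable def etaStar (G H : Polynomial F) : ℂ :=
  ∑' D : {D : Polynomial F // D.degree < H.degree ∧ ugcd F D H = 1}, echar p F G H D.1

/-- The Dirichlet convolution of `μ_k` with `f` on `k`-tuples of monic polynomials:
`(μ_k ∗ f)(G₁,…,G_k) = Σ_{D_i E_i = G_i, D_i,E_i monic} μ(D₁)⋯μ(D_k) · f(E₁,…,E_k)`. -/
noncomputable def muConv {k : ℕ} (f : (Fin k → Polynomial F) → ℂ)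
    (G : Fin k → Polynomial F) : ℂ :=
  ∑' DE : {DE : (Fin k → Polynomial F) × (Fin k → Polynomial F) //
      (∀ i, (DE.1 i).Monic) ∧ (∀ i, (DE.2 i).Monic) ∧ ∀ i, DE.1 i * DE.2 i = G i},
    (∏ i, (mu F (DE.1.1 i) : ℂ)) * f DE.1.2

/-! ### Finite sets of residues and of monic divisors -/

omit [DecidableEq F] in
theorem finite_degree_lt (n : ℕ) : {D : F[X] | D.degree < n}.Finite := by
  have : Finite (degreeLT F n) := Finite.of_equiv _ (degreeLTEquiv F n).symm.toEquiv
  refine (Set.toFinite (degreeLT F n : Set F[X])).subset fun D hD => ?_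
  exact mem_degreeLT.2 hD

/-- The polynomials of degree less than `n`. -/
noncomputable def resid (n : ℕ) : Finset F[X] := (finite_degree_lt F n).toFinset

omit [DecidableEq F] in
theorem mem_resid {n : ℕ} {D : F[X]} : D ∈ resid F n ↔ D.degree < n := by
  simp [resid]

omit [DecidableEq F] in
theorem card_resid (n : ℕ) : (resid F n).card = Fintype.card F ^ n := by
  have h : Nat.card (resid F n) = Nat.card (degreeLT F n) :=
    Nat.card_congr (Equiv.subtypeEquivRight fun D => by rw [mem_resid, mem_degreeLT])
  rw [Nat.card_congr (degreeLTEquiv F n).toEquiv] at h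
  simpa using h

open scoped Classical in
/-- The monic divisors of a nonzero polynomial `N` (the degree bound makes the set finite, and
is automatic for `N ≠ 0`). -/
noncomputable def mdiv (N : F[X]) : Finset F[X] :=
  (resid F (N.natDegree + 1)).filter fun D => D.Monic ∧ D ∣ N

theorem mem_mdiv {N D : F[X]} (hN : N ≠ 0) : D ∈ mdiv F N ↔ D.Monic ∧ D ∣ N := by
  classical
  rw [mdiv, Finset.mem_filter, mem_resid]
  refine ⟨fun h => h.2, fun h => ⟨?_, h⟩⟩
  refine (degree_le_of_dvd h.2 hN).trans_lt ?_
  rw [degree_eq_natDegree hN]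
  exact_mod_cast Nat.lt_succ_self _

variable {F} in
omit [Fintype F] [DecidableEq F] in
theorem monic_div {N D : F[X]} (hN : N.Monic) (hD : D.Monic) (h : D ∣ N) : (N / D).Monic := by
  obtain ⟨E, rfl⟩ := h
  rw [mul_div_cancel_left₀ _ hD.ne_zero]
  exact hD.of_mul_monic_left hN

/-- The tuples of monic divisors of the entries of a tuple `N`. -/
noncomputable def tdiv {k : ℕ} (N : Fin k → F[X]) : Finset (Fin k → F[X]) :=
  Fintype.piFinset fun i => mdiv F (N i)

theorem mem_tdiv {k : ℕ} {N D : Fin k → F[X]} (hN : ∀ i, (N i).Monic) :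
    D ∈ tdiv F N ↔ ∀ i, (D i).Monic ∧ D i ∣ N i := by
  simp only [tdiv, Fintype.mem_piFinset]
  exact forall_congr' fun i => mem_mdiv F (hN i).ne_zero

/-- Writing `M = D * E * B` with `H = D * E`, the chains `E ∣ H ∣ M` are the pairs of a divisor
`D` of `M` and a divisor `E` of `M / D`. -/
theorem sum_mdiv_swap {R : Type*} [AddCommMonoid R] (h : F[X] → F[X] → R) {M : F[X]}
    (hM : M.Monic) :
    ∑ H ∈ mdiv F M, ∑ E ∈ mdiv F H, h E (H / E) =
      ∑ D ∈ mdiv F M, ∑ E ∈ mdiv F (M / D), h E D := by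
  rw [Finset.sum_sigma', Finset.sum_sigma']
  refine Finset.sum_bij' (fun x _ => ⟨x.1 / x.2, x.2⟩) (fun x _ => ⟨x.1 * x.2, x.2⟩) ?_ ?_ ?_ ?_ ?_
  · rintro ⟨H, E⟩ hx
    rw [Finset.mem_sigma, mem_mdiv F hM.ne_zero] at hx
    obtain ⟨⟨hH, B, hB⟩, hE⟩ := hx
    rw [mem_mdiv F hH.ne_zero] at hE
    obtain ⟨hE, D, hD⟩ := hE
    simp only at hH hB hE hD
    subst hD
    have hDm := hE.of_mul_monic_left hH
    subst hB
    simp only [Finset.mem_sigma]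
    rw [mul_div_cancel_left₀ _ hE.ne_zero, mem_mdiv F hM.ne_zero,
      mem_mdiv F (monic_div hM hDm ⟨E * B, by ring⟩).ne_zero,
      show E * D * B = D * (E * B) by ring, mul_div_cancel_left₀ _ hDm.ne_zero]
    exact ⟨⟨hDm, _, rfl⟩, hE, _, rfl⟩
  · rintro ⟨D, E⟩ hx
    rw [Finset.mem_sigma, mem_mdiv F hM.ne_zero] at hx
    obtain ⟨⟨hD, B, hB⟩, hE⟩ := hx
    simp only at hD hB hE
    subst hB
    rw [mul_div_cancel_left₀ _ hD.ne_zero, mem_mdiv F (hD.of_mul_monic_left hM).ne_zero] at hE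
    obtain ⟨hE, C, rfl⟩ := hE
    simp only [Finset.mem_sigma]
    rw [mem_mdiv F hM.ne_zero, mem_mdiv F (hD.mul hE).ne_zero]
    exact ⟨⟨hD.mul hE, C, by ring⟩, hE, D, by ring⟩
  · rintro ⟨H, E⟩ hx
    rw [Finset.mem_sigma, mem_mdiv F hM.ne_zero] at hx
    obtain ⟨⟨hH, -⟩, hE⟩ := hx
    rw [mem_mdiv F hH.ne_zero] at hE
    simp only [Sigma.mk.injEq, heq_eq_eq, and_true]
    rw [mul_comm, EuclideanDomain.mul_div_cancel' hE.1.ne_zero hE.2]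
  · rintro ⟨D, E⟩ hx
    rw [Finset.mem_sigma, mem_mdiv F hM.ne_zero] at hx
    obtain ⟨⟨hD, hDM⟩, hE⟩ := hx
    rw [mem_mdiv F (monic_div hM hD hDM).ne_zero] at hE
    simp only [Sigma.mk.injEq, heq_eq_eq, and_true]
    rw [mul_div_cancel_right₀ _ hE.1.ne_zero]
  · rintro ⟨H, E⟩ hx
    rfl

/-- The analogue of `sum_mdiv_swap` for tuples. -/
theorem sum_tdiv_swap {R : Type*} [AddCommMonoid R] {k : ℕ}
    (h : (Fin k → F[X]) → (Fin k → F[X]) → R) {M : Fin k → F[X]} (hM : ∀ i, (M i).Monic) :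
    ∑ H ∈ tdiv F M, ∑ E ∈ tdiv F H, h E (fun i => H i / E i) =
      ∑ D ∈ tdiv F M, ∑ E ∈ tdiv F (fun i => M i / D i), h E D := by
  rw [Finset.sum_sigma', Finset.sum_sigma']
  refine Finset.sum_bij' (fun x _ => ⟨fun i => x.1 i / x.2 i, x.2⟩)
    (fun x _ => ⟨fun i => x.1 i * x.2 i, x.2⟩) ?_ ?_ ?_ ?_ ?_
  · rintro ⟨H, E⟩ hx
    rw [Finset.mem_sigma, mem_tdiv F hM] at hx
    obtain ⟨hH, hE⟩ := hx
    rw [mem_tdiv F fun i => (hH i).1] at hE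
    have hq : ∀ i, (H i / E i).Monic := fun i => monic_div (hH i).1 (hE i).1 (hE i).2
    have hd : ∀ i, H i / E i ∣ M i := fun i =>
      (Dvd.intro_left _ (EuclideanDomain.mul_div_cancel' (hE i).1.ne_zero (hE i).2)).trans
        (hH i).2
    rw [Finset.mem_sigma, mem_tdiv F hM, mem_tdiv F fun i => monic_div (hM i) (hq i) (hd i)]
    refine ⟨fun i => ⟨hq i, hd i⟩, fun i => ⟨(hE i).1, ?_⟩⟩
    refine (mul_dvd_mul_iff_left (hq i).ne_zero).1 ?_
    rw [EuclideanDomain.mul_div_cancel' (hq i).ne_zero (hd i), mul_comm,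
      EuclideanDomain.mul_div_cancel' (hE i).1.ne_zero (hE i).2]
    exact (hH i).2
  · rintro ⟨D, E⟩ hx
    rw [Finset.mem_sigma, mem_tdiv F hM] at hx
    obtain ⟨hD, hE⟩ := hx
    rw [mem_tdiv F fun i => monic_div (hM i) (hD i).1 (hD i).2] at hE
    rw [Finset.mem_sigma, mem_tdiv F hM, mem_tdiv F fun i => (hD i).1.mul (hE i).1]
    refine ⟨fun i => ⟨(hD i).1.mul (hE i).1, ?_⟩, fun i => ⟨(hE i).1, Dvd.intro_left _ rfl⟩⟩
    have := mul_dvd_mul_left (D i) (hE i).2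
    rwa [EuclideanDomain.mul_div_cancel' (hD i).1.ne_zero (hD i).2] at this
  · rintro ⟨H, E⟩ hx
    rw [Finset.mem_sigma, mem_tdiv F hM] at hx
    obtain ⟨hH, hE⟩ := hx
    rw [mem_tdiv F fun i => (hH i).1] at hE
    simp only [Sigma.mk.injEq, heq_eq_eq, and_true]
    funext i
    rw [mul_comm, EuclideanDomain.mul_div_cancel' (hE i).1.ne_zero (hE i).2]
  · rintro ⟨D, E⟩ hx
    rw [Finset.mem_sigma, mem_tdiv F hM] at hx
    obtain ⟨hD, hE⟩ := hx
    rw [mem_tdiv F fun i => monic_div (hM i) (hD i).1 (hD i).2] at hE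
    simp only [Sigma.mk.injEq, heq_eq_eq, and_true]
    funext i
    rw [mul_div_cancel_right₀ _ (hE i).1.ne_zero]
  · rintro ⟨H, E⟩ hx
    rfl

/-! ### Möbius sums -/

open scoped Classical in
/-- The squarefree monic divisors of `N` are the products of the sets of monic irreducible
divisors of `N`. -/
theorem sum_squarefree_mdiv {R : Type*} [AddCommMonoid R] (g : ℕ → R) {N : F[X]} (hN : N ≠ 0) :
    ∑ E ∈ mdiv F N, (if Squarefree E then g (omega F E) else 0) =
      ∑ S ∈ (normalizedFactors N).toFinset.powerset, g S.card := by
  have key : ∀ S : Finset F[X], S ⊆ (normalizedFactors N).toFinset →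
      normalizedFactors S.val.prod = S.val ∧ S.val.prod.Monic := by
    intro S hS
    have h1 : ∀ a ∈ S.val, a ∈ normalizedFactors N := fun a ha =>
      Multiset.mem_toFinset.1 (hS (Finset.mem_def.2 ha))
    constructor
    · rw [normalizedFactors_prod_eq _ fun a ha => irreducible_of_normalized_factor a (h1 a ha)]
      conv_rhs => rw [← Multiset.map_id S.val]
      exact Multiset.map_congr rfl fun a ha => normalize_normalized_factor a (h1 a ha)
    · have := monic_multiset_prod_of_monic S.val id fun a ha => by
        have h2 := monic_normalize (irreducible_of_normalized_factor a (h1 a ha)).ne_zero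
        rwa [normalize_normalized_factor a (h1 a ha)] at h2
      simpa using this
  rw [← Finset.sum_filter]
  refine Finset.sum_bij' (fun E _ => (normalizedFactors E).toFinset) (fun S _ => S.val.prod)
    ?_ ?_ ?_ ?_ ?_
  · intro E hE
    rw [Finset.mem_filter, mem_mdiv F hN] at hE
    rw [Finset.mem_powerset]
    exact Multiset.toFinset_subset.2 (Multiset.subset_of_le
      ((dvd_iff_normalizedFactors_le_normalizedFactors hE.1.1.ne_zero hN).1 hE.1.2))
  · intro S hS
    rw [Finset.mem_powerset] at hS
    obtain ⟨h1, h2⟩ := key S hS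
    rw [Finset.mem_filter, mem_mdiv F hN, squarefree_iff_nodup_normalizedFactors h2.ne_zero,
      dvd_iff_normalizedFactors_le_normalizedFactors h2.ne_zero hN, h1]
    refine ⟨⟨h2, ?_⟩, S.nodup⟩
    rw [Multiset.le_iff_subset S.nodup]
    exact fun a ha => Multiset.mem_toFinset.1 (hS (Finset.mem_def.2 ha))
  · intro E hE
    rw [Finset.mem_filter, mem_mdiv F hN] at hE
    have := (squarefree_iff_nodup_normalizedFactors hE.1.1.ne_zero).1 hE.2
    rw [Multiset.toFinset_val, this.dedup, prod_normalizedFactors_eq hE.1.1.ne_zero,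
      hE.1.1.normalize_eq_self]
  · intro S hS
    rw [(key S (Finset.mem_powerset.1 hS)).1, Finset.val_toFinset]
  · intro E hE
    rfl

open scoped Classical in
/-- `∑_{E ∣ N} μ(E)` is `1` if `N` is constant and `0` otherwise. -/
theorem sum_mu_mdiv {N : F[X]} (hN : N ≠ 0) :
    ∑ E ∈ mdiv F N, mu F E = if IsUnit N then 1 else 0 := by
  have h := sum_squarefree_mdiv F (fun n => (-1 : ℤ) ^ n) hN
  rw [Finset.sum_powerset_neg_one_pow_card] at h
  have h2 : (normalizedFactors N).toFinset = ∅ ↔ IsUnit N := by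
    rw [Multiset.toFinset_eq_empty, normalizedFactors_eq_zero_iff hN]
  rw [if_congr h2 rfl rfl] at h
  exact h

theorem sum_abs_mu_mdiv {N : F[X]} (hN : N ≠ 0) :
    ∑ E ∈ mdiv F N, ‖(mu F E : ℂ)‖ = 2 ^ omega F N := by
  classical
  have h := sum_squarefree_mdiv F (fun _ => (1 : ℝ)) hN
  rw [Finset.sum_const, Finset.card_powerset] at h
  refine Eq.trans (Finset.sum_congr rfl fun E _ => ?_) (h.trans (by simp [omega]))
  by_cases hE : Squarefree E <;> simp [mu, hE]

omit [Fintype F] in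
theorem omega_mono {D N : F[X]} (hN : N ≠ 0) (h : D ∣ N) : omega F D ≤ omega F N := by
  classical
  have hD : D ≠ 0 := ne_zero_of_dvd_ne_zero hN h
  exact Finset.card_le_card (Multiset.toFinset_subset.2 (Multiset.subset_of_le
      ((dvd_iff_normalizedFactors_le_normalizedFactors hD hN).1 h)))

/-- The convolution `μ_k ∗ f` at a monic tuple as a finite sum over divisors. -/
theorem muConv_eq {k : ℕ} (f : (Fin k → F[X]) → ℂ) {N : Fin k → F[X]}
    (hN : ∀ i, (N i).Monic) :
    muConv F f N = ∑ D ∈ tdiv F N, (∏ i, (mu F (D i) : ℂ)) * f (fun i => N i / D i) := by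
  rw [← Finset.tsum_subtype (tdiv F N) fun D =>
    (∏ i, (mu F (D i) : ℂ)) * f (fun i => N i / D i), muConv]
  let e : {DE : (Fin k → Polynomial F) × (Fin k → Polynomial F) //
      (∀ i, (DE.1 i).Monic) ∧ (∀ i, (DE.2 i).Monic) ∧ ∀ i, DE.1 i * DE.2 i = N i} ≃
      tdiv F N :=
    { toFun := fun x => ⟨x.1.1, (mem_tdiv F hN).2 fun i => ⟨x.2.1 i, _, (x.2.2.2 i).symm⟩⟩
      invFun := fun x => ⟨⟨x.1, fun i => N i / x.1 i⟩, by
        have hx := (mem_tdiv F hN).1 x.2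
        exact ⟨fun i => (hx i).1, fun i => monic_div (hN i) (hx i).1 (hx i).2,
          fun i => EuclideanDomain.mul_div_cancel' (hx i).1.ne_zero (hx i).2⟩⟩
      left_inv := by
        rintro ⟨⟨D, E⟩, h1, h2, h3⟩
        simp only [Subtype.mk.injEq, Prod.mk.injEq, true_and]
        funext i
        rw [← h3 i]
        exact mul_div_cancel_left₀ _ (h1 i).ne_zero
      right_inv := fun x => rfl }
  rw [← e.tsum_eq]
  refine tsum_congr ?_
  rintro ⟨⟨D, E⟩, h1, h2, h3⟩
  have : E = fun i => N i / D i := by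
    funext i
    rw [← h3 i]
    exact (mul_div_cancel_left₀ _ (h1 i).ne_zero).symm
  simp only [e, Equiv.coe_fn_mk, this]

/-- Möbius inversion: summing `μ_k ∗ f` over divisors recovers `f`. -/
theorem sum_muConv {k : ℕ} (f : (Fin k → F[X]) → ℂ) {G : Fin k → F[X]}
    (hG : ∀ i, (G i).Monic) : ∑ N ∈ tdiv F G, muConv F f N = f G := by
  classical
  have h1 : ∑ N ∈ tdiv F G, muConv F f N = ∑ N ∈ tdiv F G, ∑ D ∈ tdiv F N,
      (∏ i, (mu F (D i) : ℂ)) * f (fun i => N i / D i) :=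
    Finset.sum_congr rfl fun N hN => muConv_eq F f fun i => ((mem_tdiv F hG).1 hN i).1
  rw [h1, sum_tdiv_swap F (fun D E => (∏ i, (mu F (D i) : ℂ)) * f E) hG]
  have hGG : G ∈ tdiv F G := (mem_tdiv F hG).2 fun i => ⟨hG i, dvd_rfl⟩
  rw [Finset.sum_eq_single_of_mem G hGG]
  · rw [← Finset.sum_mul, tdiv, ← Finset.prod_univ_sum _ (fun _ D => (mu F D : ℂ)),
      Finset.prod_eq_one, one_mul]
    intro i _
    rw [EuclideanDomain.div_self (hG i).ne_zero]
    have := sum_mu_mdiv F (one_ne_zero (α := F[X]))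
    rw [if_pos isUnit_one] at this
    exact_mod_cast this
  · intro E hE hne
    have hE' := (mem_tdiv F hG).1 hE
    obtain ⟨i, hi⟩ := Function.ne_iff.1 hne
    rw [← Finset.sum_mul, tdiv, ← Finset.prod_univ_sum _ (fun _ D => (mu F D : ℂ)),
      Finset.prod_eq_zero (Finset.mem_univ i), zero_mul]
    have hm := monic_div (hG i) (hE' i).1 (hE' i).2
    have := sum_mu_mdiv F hm.ne_zero
    -- some quotient `G i / E i` is a monic nonunit, so the corresponding factor vanishes
    rw [if_neg] at this
    · exact_mod_cast this
    · intro hu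
      have h1 := hm.eq_one_of_isUnit hu
      have h2 := EuclideanDomain.mul_div_cancel' (hE' i).1.ne_zero (hE' i).2
      rw [h1, mul_one] at h2
      exact hi h2

/-! ### The additive characters and the Ramanujan sums -/

omit [Fintype F] [DecidableEq F] in
theorem tmap_add (H A B : F[X]) : tmap F H (A + B) = tmap F H A + tmap F H B := by
  simp [tmap, add_mod]

omit [Fintype F] [DecidableEq F] in
theorem echar_eq (G H D : F[X]) :
    echar p F G H D = ZMod.stdAddChar (Algebra.trace (ZMod p) F (tmap F H (G * D))) := by
  rw [ZMod.stdAddChar_apply, ZMod.toCircle_apply, echar]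

omit [Fintype F] [DecidableEq F] in
theorem echar_add (G H D D' : F[X]) :
    echar p F G H (D + D') = echar p F G H D * echar p F G H D' := by
  rw [echar_eq, echar_eq, echar_eq, mul_add, tmap_add, map_add, AddChar.map_add_eq_mul]

omit [Fintype F] [DecidableEq F] in
theorem tmap_mul {E H : F[X]} (hE : E.Monic) (hH : H.Monic) (X : F[X]) :
    tmap F (E * H) (E * X) = tmap F H X := by
  have hr : (X % H).degree < H.degree := degree_mod_lt X hH.ne_zero
  have h1 : (E * X) % (E * H) = E * (X % H) := by
    conv_lhs => rw [← EuclideanDomain.div_add_mod X H]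
    rw [mul_add, add_mod, ← mul_assoc, EuclideanDomain.mod_eq_zero.2 (dvd_mul_right _ _), zero_add,
      mod_eq_self_iff (mul_ne_zero hE.ne_zero hH.ne_zero), degree_mul, degree_mul]
    exact WithBot.add_lt_add_left (degree_ne_bot.2 hE.ne_zero) hr
  rw [tmap, tmap, h1, hE.natDegree_mul hH]
  rcases Nat.eq_zero_or_pos H.natDegree with h0 | h0
  -- for `H = 1` the truncated index `deg H - 1` is `0`, and both remainders vanish
  · have : X % H = 0 := by
      rw [hH.natDegree_eq_zero.1 h0]
      exact EuclideanDomain.mod_one X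
    simp [this]
  · rw [Nat.add_sub_assoc h0, coeff_mul_add_eq_of_natDegree_le le_rfl, hE.coeff_natDegree, one_mul]
    have := natDegree_mod_lt X h0.ne'
    omega

omit [Fintype F] [DecidableEq F] in
/-- Reduction of the modulus: for monic `E`, the character `E(G, E * H)` at `E * D` is the
character `E(G, H)` at `D`. -/
theorem echar_mul {E H : F[X]} (hE : E.Monic) (hH : H.Monic) (G D : F[X]) :
    echar p F G (E * H) (E * D) = echar p F G H D := by
  rw [echar, echar, mul_left_comm, tmap_mul F hE hH]

omit [DecidableEq F] in
/-- If `H ∤ G` then `E(G, H)` is a nontrivial character: with `r` the remainder of `G` modulo `H`,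
a monomial of degree `deg H - 1 - deg r` moves the leading coefficient of `r` into the place read
off by `t_H`, and the trace is not identically zero. -/
theorem exists_echar_ne_one {G H : F[X]} (hH : H.Monic) (h : ¬ H ∣ G) :
    ∃ D ∈ resid F H.natDegree, echar p F G H D ≠ 1 := by
  have hr0 : G % H ≠ 0 := fun h0 => h (EuclideanDomain.mod_eq_zero.1 h0)
  have hr : (G % H).degree < H.degree := degree_mod_lt G hH.ne_zero
  have hn : (G % H).natDegree < H.natDegree := natDegree_lt_natDegree hr0 hr
  obtain ⟨c, hc⟩ := Algebra.trace_surjective (ZMod p) F 1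
  have hl : (G % H).leadingCoeff ≠ 0 := leadingCoeff_ne_zero.2 hr0
  refine ⟨C (c / (G % H).leadingCoeff) * X ^ (H.natDegree - 1 - (G % H).natDegree), ?_, ?_⟩
  · rw [mem_resid]
    refine (degree_C_mul_X_pow_le _ _).trans_lt ?_
    exact_mod_cast (by omega)
  · set M := C (c / (G % H).leadingCoeff) * X ^ (H.natDegree - 1 - (G % H).natDegree) with hM
    have hMd : M.natDegree ≤ H.natDegree - 1 - (G % H).natDegree := natDegree_C_mul_X_pow_le _ _
    have h1 : (G * M) % H = (G % H) * M := by
      conv_lhs => rw [← EuclideanDomain.div_add_mod G H]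
      rw [add_mul, add_mod, mul_assoc, EuclideanDomain.mod_eq_zero.2 (dvd_mul_right _ _), zero_add,
        mod_eq_self_iff hH.ne_zero]
      refine degree_le_natDegree.trans_lt ?_
      rw [degree_eq_natDegree hH.ne_zero]
      have := (natDegree_mul_le (p := G % H) (q := M))
      exact_mod_cast (by omega)
    have h2 : tmap F H (G * M) = c := by
      rw [tmap, h1, show H.natDegree - 1 = (G % H).natDegree +
        (H.natDegree - 1 - (G % H).natDegree) by omega,
        coeff_mul_add_eq_of_natDegree_le le_rfl hMd, hM, coeff_C_mul_X_pow, if_pos rfl]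
      exact mul_div_cancel₀ _ hl
    rw [echar_eq, h2, hc, ← AddChar.map_zero_eq_one (ZMod.stdAddChar (N := p))]
    exact fun h3 => one_ne_zero (ZMod.injective_stdAddChar h3)

omit [DecidableEq F] in
open scoped Classical in
/-- Orthogonality of additive characters. -/
theorem sum_echar (G : F[X]) {H : F[X]} (hH : H.Monic) :
    ∑ D ∈ resid F H.natDegree, echar p F G H D = if H ∣ G then (anorm F H : ℂ) else 0 := by
  split_ifs with h
  · have : ∀ D ∈ resid F H.natDegree, echar p F G H D = 1 := fun D _ => by
      rw [echar_eq, tmap, EuclideanDomain.mod_eq_zero.2 (h.mul_right D)]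
      simp
    rw [Finset.sum_congr rfl this, Finset.sum_const, card_resid]
    simp [anorm]
  -- translation by `D₀` permutes the residues and multiplies the sum by `E(G, H)(D₀) ≠ 1`
  · obtain ⟨D₀, hD₀, hne⟩ := exists_echar_ne_one p F hH h
    rw [mem_resid] at hD₀
    have h1 : ∑ D ∈ resid F H.natDegree, echar p F G H D =
        ∑ D ∈ resid F H.natDegree, echar p F G H (D + D₀) := by
      refine Finset.sum_bij' (fun D _ => D - D₀) (fun D _ => D + D₀) ?_ ?_ ?_ ?_ ?_
      · intro D hD
        rw [mem_resid] at hD ⊢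
        exact (degree_sub_le _ _).trans_lt (max_lt hD hD₀)
      · intro D hD
        rw [mem_resid] at hD ⊢
        exact (degree_add_le _ _).trans_lt (max_lt hD hD₀)
      all_goals simp
    simp only [echar_add, ← Finset.sum_mul] at h1
    by_contra h0
    exact hne (mul_left_cancel₀ h0 (by rw [mul_one]; exact h1.symm))

open scoped Classical in
/-- The Möbius function detects coprimality with `H`. -/
theorem sum_mu_coprime {H : F[X]} (hH : H.Monic) (D : F[X]) :
    ∑ E ∈ mdiv F H, (if E ∣ D then (mu F E : ℂ) else 0) = if IsCoprime D H then 1 else 0 := by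
  have hg : EuclideanDomain.gcd D H ≠ 0 := fun h =>
    hH.ne_zero (EuclideanDomain.gcd_eq_zero_iff.1 h).2
  have h1 : (mdiv F H).filter (fun E => E ∣ D) = mdiv F (EuclideanDomain.gcd D H) := by
    ext E
    rw [Finset.mem_filter, mem_mdiv F hH.ne_zero, mem_mdiv F hg]
    exact ⟨fun h => ⟨h.1.1, EuclideanDomain.dvd_gcd h.2 h.1.2⟩, fun h =>
      ⟨⟨h.1, h.2.trans (EuclideanDomain.gcd_dvd_right _ _)⟩,
        h.2.trans (EuclideanDomain.gcd_dvd_left _ _)⟩⟩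
  rw [← Finset.sum_filter, h1, ← Int.cast_sum, sum_mu_mdiv F hg,
    if_congr EuclideanDomain.gcd_isUnit_iff rfl rfl]
  push_cast
  rfl

open scoped Classical in
/-- Hölder-type evaluation: `η(G, H) = ∑ μ(E) |H / E|`, over the monic divisors `E` of `H` such
that `H / E` divides `G`. -/
theorem eta_eq (G : F[X]) {H : F[X]} (hH : H.Monic) :
    eta p F G H = ∑ E ∈ mdiv F H, (mu F E : ℂ) *
      (if H / E ∣ G then (anorm F (H / E) : ℂ) else 0) := by
  have h1 : eta p F G H =
      ∑ D ∈ resid F H.natDegree, if IsCoprime D H then echar p F G H D else 0 := by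
    rw [← Finset.sum_filter, ← Finset.tsum_subtype _ fun D => echar p F G H D]
    unfold _root_.eta
    refine (Equiv.subtypeEquivRight fun D => ?_).tsum_eq
      (fun D : {D // D ∈ (resid F H.natDegree).filter fun D => IsCoprime D H} =>
        echar p F G H D.1)
    rw [Finset.mem_filter, mem_resid, degree_eq_natDegree hH.ne_zero]
  have h2 : ∀ D, (if IsCoprime D H then echar p F G H D else 0) =
      ∑ E ∈ mdiv F H, if E ∣ D then (mu F E : ℂ) * echar p F G H D else 0 := fun D => by
    have := congrArg (· * echar p F G H D) (sum_mu_coprime F hH D)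
    simp only [Finset.sum_mul, ite_mul, one_mul, zero_mul] at this
    exact this.symm
  rw [h1, Finset.sum_congr rfl fun D _ => h2 D, Finset.sum_comm]
  refine Finset.sum_congr rfl fun E hE => ?_
  rw [mem_mdiv F hH.ne_zero] at hE
  obtain ⟨hE, H', rfl⟩ := hE
  have hH' := hE.of_mul_monic_left hH
  rw [mul_div_cancel_left₀ _ hE.ne_zero, ← sum_echar p F G hH', ← Finset.sum_filter,
    ← Finset.mul_sum]
  congr 1
  have hdeg : ∀ D : F[X], (E * D).degree < ((E * H').natDegree : WithBot ℕ) ↔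
      D.degree < (H'.natDegree : WithBot ℕ) := fun D => by
    rw [← degree_eq_natDegree hH.ne_zero, ← degree_eq_natDegree hH'.ne_zero, degree_mul,
      degree_mul]
    exact WithBot.add_lt_add_iff_left (degree_ne_bot.2 hE.ne_zero)
  refine Finset.sum_bij' (fun D _ => D / E) (fun D _ => E * D) ?_ ?_ ?_ ?_ ?_
  · intro D hD
    rw [Finset.mem_filter, mem_resid] at hD
    obtain ⟨hD, D', rfl⟩ := hD
    rw [mul_div_cancel_left₀ _ hE.ne_zero, mem_resid]
    exact (hdeg D').1 hD
  · intro D hD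
    rw [mem_resid] at hD
    rw [Finset.mem_filter, mem_resid]
    exact ⟨(hdeg D).2 hD, dvd_mul_right _ _⟩
  · intro D hD
    exact EuclideanDomain.mul_div_cancel' hE.ne_zero (Finset.mem_filter.1 hD).2
  · intro D hD
    exact mul_div_cancel_left₀ _ hE.ne_zero
  · intro D hD
    rw [← echar_mul p F hE hH',
      EuclideanDomain.mul_div_cancel' hE.ne_zero (Finset.mem_filter.1 hD).2]

open scoped Classical in
/-- By `eta_eq` this is `∑_{D ∣ M, D ∣ G} |D| ∑_{E ∣ M / D} μ(E)`, where only `D = M` survives. -/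
theorem sum_eta (G : F[X]) {M : F[X]} (hM : M.Monic) :
    ∑ H ∈ mdiv F M, eta p F G H = if M ∣ G then (anorm F M : ℂ) else 0 := by
  rw [Finset.sum_congr rfl fun H hH => eta_eq p F G ((mem_mdiv F hM.ne_zero).1 hH).1,
    sum_mdiv_swap F (fun E D => (mu F E : ℂ) * (if D ∣ G then (anorm F D : ℂ) else 0)) hM]
  rw [Finset.sum_eq_single_of_mem M ((mem_mdiv F hM.ne_zero).2 ⟨hM, dvd_rfl⟩)]
  · rw [← Finset.sum_mul, EuclideanDomain.div_self hM.ne_zero, ← Int.cast_sum,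
      sum_mu_mdiv F one_ne_zero, if_pos isUnit_one, Int.cast_one, one_mul]
  · intro D hD hne
    rw [mem_mdiv F hM.ne_zero] at hD
    have hm := monic_div hM hD.1 hD.2
    rw [← Finset.sum_mul, ← Int.cast_sum, sum_mu_mdiv F hm.ne_zero, if_neg, Int.cast_zero,
      zero_mul]
    intro hu
    have h2 := EuclideanDomain.mul_div_cancel' hD.1.ne_zero hD.2
    rw [hm.eq_one_of_isUnit hu, mul_one] at h2
    exact hne h2

/-- The number of squarefree divisors of a divisor of `M` is at most `2 ^ ω(M)`, so the absolute
Ramanujan sums over the divisors of `M` are controlled by the sum of divisors of `G`. -/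
theorem sum_norm_eta_le {G : F[X]} (hG : G.Monic) {M : F[X]} (hM : M.Monic) :
    ∑ H ∈ mdiv F M, ‖eta p F G H‖ ≤ 2 ^ omega F M * ∑ D ∈ mdiv F G, (anorm F D : ℝ) := by
  classical
  have h1 : ∀ H ∈ mdiv F M, ‖eta p F G H‖ ≤ ∑ E ∈ mdiv F H, ‖(mu F E : ℂ)‖ *
      (if H / E ∣ G then (anorm F (H / E) : ℝ) else 0) := fun H hH => by
    rw [eta_eq p F G ((mem_mdiv F hM.ne_zero).1 hH).1]
    refine (norm_sum_le _ _).trans (Finset.sum_le_sum fun E _ => ?_)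
    rw [norm_mul]
    refine le_of_eq ?_
    split_ifs <;> simp
  refine (Finset.sum_le_sum h1).trans ?_
  rw [sum_mdiv_swap F
    (fun E D => ‖(mu F E : ℂ)‖ * (if D ∣ G then (anorm F D : ℝ) else 0)) hM, Finset.mul_sum]
  have h2 : ∀ D ∈ mdiv F M, ∑ E ∈ mdiv F (M / D),
      ‖(mu F E : ℂ)‖ * (if D ∣ G then (anorm F D : ℝ) else 0) ≤
      if D ∣ G then (2 ^ omega F M * (anorm F D : ℝ)) else 0 := fun D hD => by
    rw [mem_mdiv F hM.ne_zero] at hD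
    have hm := monic_div hM hD.1 hD.2
    rw [← Finset.sum_mul, sum_abs_mu_mdiv F hm.ne_zero]
    split_ifs
    · refine mul_le_mul_of_nonneg_right ?_ (Nat.cast_nonneg _)
      exact pow_le_pow_right₀ one_le_two (omega_mono F hM.ne_zero
        (Dvd.intro_left _ (EuclideanDomain.mul_div_cancel' hD.1.ne_zero hD.2)))
    · simp
  refine (Finset.sum_le_sum h2).trans ?_
  rw [← Finset.sum_filter]
  refine Finset.sum_le_sum_of_subset_of_nonneg (fun D hD => ?_) fun D _ _ => by positivity
  rw [Finset.mem_filter, mem_mdiv F hM.ne_zero] at hD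
  exact (mem_mdiv F hG.ne_zero).2 ⟨hD.1.1, hD.2⟩

/-! ### Rearrangement of the double series -/

/-- Pairs `(H, M)` of monic tuples correspond to pairs of a monic tuple `N = M * H` and a tuple `H`
of divisors of `N`. -/
noncomputable def divisorEquiv (k : ℕ) :
    (Σ N : {N : Fin k → F[X] // ∀ i, (N i).Monic}, tdiv F N.1) ≃
      {H : Fin k → F[X] // ∀ i, (H i).Monic} × {M : Fin k → F[X] // ∀ i, (M i).Monic} where
  toFun x := ⟨⟨x.2.1, fun i => ((mem_tdiv F x.1.2).1 x.2.2 i).1⟩,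
    ⟨fun i => x.1.1 i / x.2.1 i, fun i => monic_div (x.1.2 i)
      ((mem_tdiv F x.1.2).1 x.2.2 i).1 ((mem_tdiv F x.1.2).1 x.2.2 i).2⟩⟩
  invFun y := ⟨⟨fun i => y.2.1 i * y.1.1 i, fun i => (y.2.2 i).mul (y.1.2 i)⟩,
    ⟨y.1.1, (mem_tdiv F fun i => (y.2.2 i).mul (y.1.2 i)).2 fun i =>
      ⟨y.1.2 i, dvd_mul_left _ _⟩⟩⟩
  left_inv := by
    rintro ⟨⟨N, hN⟩, ⟨H, hH⟩⟩
    have h := (mem_tdiv F hN).1 hH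
    have h1 : (fun i => N i / H i * H i) = N := by
      funext i
      rw [mul_comm, EuclideanDomain.mul_div_cancel' (h i).1.ne_zero (h i).2]
    simp only [Sigma.mk.injEq, Subtype.mk.injEq]
    refine ⟨h1, ?_⟩
    congr! 1
    rw [h1]
  right_inv := by
    rintro ⟨⟨H, hH⟩, ⟨M, hM⟩⟩
    simp only [Prod.mk.injEq, Subtype.mk.injEq, true_and]
    funext i
    exact mul_div_cancel_right₀ _ (hH i).ne_zero

/-- The rearrangement for an arbitrary coefficient function `a` in place of
`(μ_k ∗ f)(N) / |N|`: both double series run over the chains `H ∣ N`, and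
for fixed `N` the inner sum of Ramanujan sums is `|N|` if `N ∣ G` and `0` otherwise. -/
theorem expansion_aux {k : ℕ} (a : (Fin k → F[X]) → ℂ)
    (hf' : Summable fun N : {N : Fin k → F[X] // ∀ i, (N i).Monic} =>
      (2 : ℝ) ^ (∑ i, omega F (N.1 i)) * ‖a N.1‖)
    (G : Fin k → F[X]) (hG : ∀ i, (G i).Monic) :
    (∀ H : {H : Fin k → F[X] // ∀ i, (H i).Monic},
      Summable (fun M : {M : Fin k → F[X] // ∀ i, (M i).Monic} =>
        ‖a (fun i => M.1 i * H.1 i)‖)) ∧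
    Summable (fun H : {H : Fin k → F[X] // ∀ i, (H i).Monic} =>
      ‖(∑' M : {M : Fin k → F[X] // ∀ i, (M i).Monic}, a (fun i => M.1 i * H.1 i)) *
        ∏ i, eta p F (G i) (H.1 i)‖) ∧
    HasSum (fun H : {H : Fin k → F[X] // ∀ i, (H i).Monic} =>
      (∑' M : {M : Fin k → F[X] // ∀ i, (M i).Monic}, a (fun i => M.1 i * H.1 i)) *
        ∏ i, eta p F (G i) (H.1 i)) (∑ N ∈ tdiv F G, a N * ∏ i, (anorm F (N i) : ℂ)) := by
  classical
  have hsum_a : Summable fun N : {N : Fin k → F[X] // ∀ i, (N i).Monic} => ‖a N.1‖ := by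
    refine Summable.of_nonneg_of_le (fun _ => norm_nonneg _) (fun N => ?_) hf'
    exact le_mul_of_one_le_left (norm_nonneg _) (one_le_pow₀ one_le_two)
  have hC : ∀ H : {H : Fin k → Polynomial F // ∀ i, (H i).Monic},
      Summable (fun M : {M : Fin k → Polynomial F // ∀ i, (M i).Monic} =>
        ‖a (fun i => M.1 i * H.1 i)‖) := fun H => by
    have hinj : Function.Injective fun M : {M : Fin k → F[X] // ∀ i, (M i).Monic} =>
        (⟨fun i => M.1 i * H.1 i, fun i => (M.2 i).mul (H.2 i)⟩ :
          {N : Fin k → F[X] // ∀ i, (N i).Monic}) := fun M M' h => by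
      ext1
      funext i
      exact mul_right_cancel₀ (H.2 i).ne_zero (congrFun (Subtype.mk.inj h) i)
    have h0 := hsum_a.comp_injective hinj
    simpa only [Function.comp_def] using h0
  let Φ : {H : Fin k → F[X] // ∀ i, (H i).Monic} × {M : Fin k → F[X] // ∀ i, (M i).Monic} → ℂ :=
    fun y => a (fun i => y.2.1 i * y.1.1 i) * ∏ i, eta p F (G i) (y.1.1 i)
  have hΦe : ∀ x, Φ (divisorEquiv F k x) = a x.1.1 * ∏ i, eta p F (G i) (x.2.1 i) := fun x => by
    have h1 : (fun i => x.1.1 i / x.2.1 i * x.2.1 i) = x.1.1 := by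
      funext i
      have h := (mem_tdiv F x.1.2).1 x.2.2 i
      rw [mul_comm, EuclideanDomain.mul_div_cancel' h.1.ne_zero h.2]
    change a (fun i => x.1.1 i / x.2.1 i * x.2.1 i) * _ = _
    rw [h1]
    rfl
  have hΦsum : Summable Φ := by
    rw [← summable_norm_iff]
    refine (divisorEquiv F k).summable_iff.1 ?_
    refine (summable_sigma_of_nonneg fun _ => norm_nonneg _).2 ⟨fun N => (hasSum_fintype _).summable, ?_⟩
    refine Summable.of_nonneg_of_le (fun N => tsum_nonneg fun _ => norm_nonneg _) (fun N => ?_)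
      (hf'.mul_right (∏ i, ∑ D ∈ mdiv F (G i), (anorm F D : ℝ)))
    simp only [hΦe]
    rw [Finset.tsum_subtype (tdiv F N.1) fun H => ‖a N.1 * ∏ i, eta p F (G i) (H i)‖]
    simp only [norm_mul, norm_prod]
    rw [← Finset.mul_sum, tdiv,
      ← Finset.prod_univ_sum _ (fun i D => ‖eta p F (G i) D‖), mul_comm (_ ^ _), mul_assoc,
      ← Finset.prod_pow_eq_pow_sum, ← Finset.prod_mul_distrib]
    refine mul_le_mul_of_nonneg_left (Finset.prod_le_prod (fun i _ => ?_) fun i _ => ?_)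
      (norm_nonneg _)
    · exact Finset.sum_nonneg fun _ _ => norm_nonneg _
    · exact sum_norm_eta_le p F (hG i) (N.2 i)
  have hΦval : HasSum Φ (∑ N ∈ tdiv F G, a N * ∏ i, (anorm F (N i) : ℂ)) := by
    have h1 : HasSum (Φ ∘ divisorEquiv F k) (∑' y, Φ y) :=
      (divisorEquiv F k).hasSum_iff.2 hΦsum.hasSum
    have h2 := h1.sigma fun N => hasSum_fintype _
    have h3 : ∀ N : {N : Fin k → F[X] // ∀ i, (N i).Monic},
        ∑ H : tdiv F N.1, (Φ ∘ divisorEquiv F k) ⟨N, H⟩ =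
          if N.1 ∈ tdiv F G then a N.1 * ∏ i, (anorm F (N.1 i) : ℂ) else 0 := fun N => by
      simp only [Function.comp_apply, hΦe]
      rw [Finset.sum_coe_sort (tdiv F N.1) fun H => a N.1 * ∏ i, eta p F (G i) (H i),
        ← Finset.mul_sum]
      nth_rw 1 [tdiv]
      rw [← Finset.prod_univ_sum _ (fun i D => eta p F (G i) D),
        Finset.prod_congr rfl fun i _ => sum_eta p F (G i) (N.2 i)]
      split_ifs with h
      · rw [mem_tdiv F hG] at h
        rw [Finset.prod_congr rfl fun i _ => if_pos (h i).2]
      · rw [mem_tdiv F hG] at h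
        push Not at h
        obtain ⟨i, hi⟩ := h
        rw [Finset.prod_eq_zero (Finset.mem_univ i) (if_neg (hi (N.2 i))), mul_zero]
    simp only [h3] at h2
    have h4 : HasSum (fun N : {N : Fin k → F[X] // ∀ i, (N i).Monic} =>
        if N.1 ∈ tdiv F G then a N.1 * ∏ i, (anorm F (N.1 i) : ℂ) else 0)
        (∑ N ∈ tdiv F G, a N * ∏ i, (anorm F (N i) : ℂ)) := by
      have h5 : HasSum (fun N : Fin k → F[X] =>
          if N ∈ tdiv F G then a N * ∏ i, (anorm F (N i) : ℂ) else 0)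
        (∑ N ∈ tdiv F G, a N * ∏ i, (anorm F (N i) : ℂ)) := by
        rw [← Finset.sum_congr rfl fun N hN =>
          if_pos (c := N ∈ tdiv F G) (t := a N * ∏ i, (anorm F (N i) : ℂ)) (e := 0) hN]
        exact hasSum_sum_of_ne_finset_zero fun N hN => if_neg hN
      have h6 : ∀ N ∉ Set.range (Subtype.val : {N : Fin k → F[X] // ∀ i, (N i).Monic} → Fin k → F[X]),
          (if N ∈ tdiv F G then a N * ∏ i, (anorm F (N i) : ℂ) else 0) = 0 := fun N hN => by
        refine if_neg fun h => hN ?_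
        exact ⟨⟨N, fun i => ((mem_tdiv F hG).1 h i).1⟩, rfl⟩
      have h7 := (Function.Injective.hasSum_iff Subtype.val_injective h6).2 h5
      simpa only [Function.comp_def] using h7
    rw [← h2.unique h4]
    exact hΦsum.hasSum
  have hfib0 : ∀ H : {H : Fin k → F[X] // ∀ i, (H i).Monic},
      Summable fun M : {M : Fin k → F[X] // ∀ i, (M i).Monic} => a (fun i => M.1 i * H.1 i) :=
    fun H => (hC H).of_norm
  have hfib : ∀ H, HasSum (fun M => Φ (H, M))
      ((∑' M : {M : Fin k → F[X] // ∀ i, (M i).Monic}, a (fun i => M.1 i * H.1 i)) *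
        ∏ i, eta p F (G i) (H.1 i)) := fun H => by
    have h := (hfib0 H).hasSum.mul_right (∏ i, eta p F (G i) (H.1 i))
    simpa only [Φ] using h
  have hfin := hΦval.prod_fiberwise hfib
  exact ⟨hC, summable_norm_iff.2 hfin.summable, hfin⟩

/-- Ramanujan expansion of a `k`-variable arithmetic function through the polynomial
Ramanujan sums `η`: under the summability condition, for every monic tuple `(G₁,…,G_k)`,
each coefficient series `C_{H₁,…,H_k}` converges absolutely, and the family
`C_{H₁,…,H_k} η(G₁,H₁)⋯η(G_k,H_k)` is absolutely summable with sum `f(G₁,…,G_k)`. -/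
theorem ramanujan_expansion_eta (k : ℕ) (hk : 1 ≤ k)
    (f : (Fin k → Polynomial F) → ℂ)
    (hf : Summable (fun G : {G : Fin k → Polynomial F // ∀ i, (G i).Monic} =>
      (2 : ℝ) ^ (∑ i, omega F (G.1 i)) * ‖muConv F f G.1‖ / ∏ i, (anorm F (G.1 i) : ℝ)))
    (G : Fin k → Polynomial F) (hG : ∀ i, (G i).Monic) :
    (∀ H : {H : Fin k → Polynomial F // ∀ i, (H i).Monic},
      Summable (fun M : {M : Fin k → Polynomial F // ∀ i, (M i).Monic} =>
        ‖muConv F f (fun i => M.1 i * H.1 i) / ∏ i, (anorm F (M.1 i * H.1 i) : ℂ)‖)) ∧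
    Summable (fun H : {H : Fin k → Polynomial F // ∀ i, (H i).Monic} =>
      ‖(∑' M : {M : Fin k → Polynomial F // ∀ i, (M i).Monic},
          muConv F f (fun i => M.1 i * H.1 i) / ∏ i, (anorm F (M.1 i * H.1 i) : ℂ)) *
        ∏ i, eta p F (G i) (H.1 i)‖) ∧
    HasSum (fun H : {H : Fin k → Polynomial F // ∀ i, (H i).Monic} =>
      (∑' M : {M : Fin k → Polynomial F // ∀ i, (M i).Monic},
          muConv F f (fun i => M.1 i * H.1 i) / ∏ i, (anorm F (M.1 i * H.1 i) : ℂ)) *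
        ∏ i, eta p F (G i) (H.1 i)) (f G) := by
  have hne : ∀ N : Fin k → F[X], (∏ i, (anorm F (N i) : ℂ)) ≠ 0 := fun N => by
    refine Finset.prod_ne_zero_iff.2 fun i _ => ?_
    simp [anorm, Fintype.card_ne_zero]
  have h := expansion_aux p F (fun N => muConv F f N / ∏ i, (anorm F (N i) : ℂ))
    (hf.congr fun N => by rw [mul_div_assoc, norm_div, norm_prod]; simp) G hG
  have hs : ∑ N ∈ tdiv F G, muConv F f N / (∏ i, (anorm F (N i) : ℂ)) *
      ∏ i, (anorm F (N i) : ℂ) = f G := by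
    rw [← sum_muConv F f hG]
    exact Finset.sum_congr rfl fun N _ => div_mul_cancel₀ _ (hne N)
  rw [hs] at h
  exact h
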